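/- Let C be a wreath-closed permutation class containing only finitely many simple permutations, let 𝒫 be a finite query-complete set of properties, and let 𝒬 ⊆ 𝒫. Then the generating function of the set of permutations in C that satisfy every property in 𝒬 is algebraic over ℚ[x]. -/

import Mathlib

/-- A permutation of length `n`. -/
abbrev Perm (n : ℕ) := Equiv.Perm (Fin n)

/-- `σ` is contained in `π`: there is a strictly increasing sequence of indices of `π`
on which `π` is order isomorphic to `σ`. -/
def Contains {m n : ℕ} (σ : Perm m) (π : Perm n) : Prop :=
  ∃ f : Fin m → Fin n, StrictMono f ∧ ∀ s t : Fin m, π (f s) < π (f t) ↔ σ s < σ t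

/-- A permutation class: a downset in the containment order. -/
def IsPermClass (C : ∀ n, Set (Perm n)) : Prop :=
  ∀ ⦃m n : ℕ⦄ (σ : Perm m) (π : Perm n), π ∈ C n → Contains σ π → σ ∈ C m

/-- A set of contiguous values. -/
def IsRange {n : ℕ} (I : Finset (Fin n)) : Prop :=
  ∀ ⦃i j l : Fin n⦄, i ∈ I → l ∈ I → i ≤ j → j ≤ l → j ∈ I

/-- An interval of `π`: a set of contiguous indices mapped to a set of contiguous values. -/
def IsPermInterval {n : ℕ} (π : Perm n) (I : Finset (Fin n)) : Prop :=
  IsRange I ∧ IsRange (I.image π)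

/-- A permutation is simple if its only intervals have size `0`, `1`, or `n`. -/
def IsSimple {n : ℕ} (π : Perm n) : Prop :=
  ∀ I : Finset (Fin n), IsPermInterval π I → I.card ≤ 1 ∨ I.card = n

/-- The set of simple permutations belonging to the class `C` is finite. -/
def FinitelyManySimples (C : ∀ n, Set (Perm n)) : Prop :=
  {p : Σ n : ℕ, Perm n | p.2 ∈ C p.1 ∧ IsSimple p.2}.Finite

/-- The generating function `∑_{n ≥ 1} |S_n| xⁿ` of a set of permutations. -/
noncomputable def genFun (S : ∀ n, Set (Perm n)) : PowerSeries ℚ :=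
  PowerSeries.mk fun n => if n = 0 then 0 else (Nat.card (S n) : ℚ)

/-- A power series `f` is algebraic over `ℚ[x]` if there is a nonzero polynomial
`P(x,y) ∈ ℚ[x][y]` with `P(x,f) = 0`. -/
def IsAlgebraicOverQx (f : PowerSeries ℚ) : Prop :=
  ∃ P : Polynomial (Polynomial ℚ), P ≠ 0 ∧
    Polynomial.eval₂ Polynomial.coeToPowerSeries.ringHom f P = 0

/-- `π` is the inflation `σ[α 0, …, α (m-1)]` of `σ` by the nonempty permutations
`α i` (of lengths `k i ≥ 1`): `π` has length `∑ i, k i` and its value at position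
`(∑_{t < i} k t) + j` equals `(∑_{t : σ t < σ i} k t) + α i j`. -/
def IsInflation {N m : ℕ} {k : Fin m → ℕ} (σ : Perm m) (α : ∀ i, Perm (k i))
    (π : Perm N) : Prop :=
  (∀ i, 0 < k i) ∧ N = ∑ i, k i ∧
    ∀ (i : Fin m) (j : Fin (k i)) (p : Fin N),
      (p : ℕ) = (∑ t ∈ Finset.univ.filter fun t => t < i, k t) + (j : ℕ) →
      (π p : ℕ) = (∑ t ∈ Finset.univ.filter fun t => σ t < σ i, k t) + (α i j : ℕ)

/-- `C` is wreath-closed: any inflation of a member of `C` by members of `C`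
lies in `C`. -/
def WreathClosed (C : ∀ n, Set (Perm n)) : Prop :=
  ∀ ⦃m N : ℕ⦄ (σ : Perm m) (k : Fin m → ℕ) (α : ∀ i, Perm (k i)) (π : Perm N),
    σ ∈ C m → (∀ i, α i ∈ C (k i)) → IsInflation σ α π → π ∈ C N

/-- A set `Ps` of properties (a property is a set of permutations) is query-complete:
whether an inflation `σ[α 0, …, α (m-1)]` satisfies a property `P ∈ Ps` depends only on
`σ` and on which properties of `Ps` each `α i` satisfies. -/
def QueryComplete (Ps : Set (∀ n, Set (Perm n))) : Prop :=
  ∀ ⦃m : ℕ⦄ (σ : Perm m) (k k' : Fin m → ℕ)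
    (α : ∀ i, Perm (k i)) (α' : ∀ i, Perm (k' i)),
    (∀ i : Fin m, ∀ Q ∈ Ps, α i ∈ Q (k i) ↔ α' i ∈ Q (k' i)) →
    ∀ P ∈ Ps, ∀ ⦃N N' : ℕ⦄ (π : Perm N) (π' : Perm N'),
      IsInflation σ α π → IsInflation σ α' π' → (π ∈ P N ↔ π' ∈ P N')

/-!
Every permutation of length at least two is an inflation of a simple permutation, which it
determines; so are the blocks, unless the simple permutation has length two, and then they become
unique once the first block is required not to be an inflation of the same permutation. Colour a
permutation by the properties from `Ps` it satisfies and by the simple members of `C` of which it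
is an inflation. There are finitely many colours, and the colours of the blocks determine both the
colour of the inflation and whether the requirement on the first block is met. The generating
functions of the colour classes therefore satisfy a polynomial system `y i = Φ i y`, in which every
term involving the `y j` is a product of at least two of them.

All `y j` vanish at the origin, so the Jacobian of `y i - Φ i y` has constant term the identity and
is invertible over the fraction field. A derivation of the field generated by the `y i` over the
rational functions in `x` takes the `y i` to a vector in the kernel of this Jacobian, so it is zero,
and a finitely generated field extension without nonzero derivations is algebraic.
-/

/-! ### Algebraicity from a Jacobian -/

theorem derivation_aeval {ι K E M : Type*} [Fintype ι] [CommRing K] [CommRing E] [Algebra K E]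
    [AddCommGroup M] [Module K M] [Module E M] (d : Derivation K E M) (z : ι → E)
    (p : MvPolynomial ι K) :
    d (MvPolynomial.aeval z p) =
      ∑ j, MvPolynomial.aeval z (MvPolynomial.pderiv j p) • d (z j) := by
  classical
  induction p using MvPolynomial.induction_on with
  | C r => simp
  | add p q hp hq => simp [hp, hq, add_smul, Finset.sum_add_distrib]
  | mul_X p i hp =>
    simp only [map_mul, Derivation.leibniz, hp, MvPolynomial.aeval_X, Finset.smul_sum, map_add,
      MvPolynomial.pderiv_X, smul_eq_mul, add_smul, Finset.sum_add_distrib, mul_smul, add_left_inj]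
    simp [Pi.single_apply, apply_ite (MvPolynomial.aeval z)]

theorem derivation_eq_zero_of_adjoin_eq_top {K E M : Type*} [Field K] [Field E] [Algebra K E]
    [AddCommGroup M] [Module K M] [Module E M] {S : Set E} (hS : IntermediateField.adjoin K S = ⊤)
    (d : Derivation K E M) (hd : ∀ e ∈ S, d e = 0) : d = 0 := by
  ext e
  have he : e ∈ IntermediateField.adjoin K S := hS ▸ IntermediateField.mem_top
  induction he using IntermediateField.adjoin_induction with
  | mem e he => exact hd e he
  | algebraMap a => exact d.map_algebraMap a
  | add a b _ _ ha hb => simp_all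
  | inv a _ ha => simp_all [Derivation.leibniz_inv]
  | mul a b _ _ ha hb => simp_all

theorem formallyUnramified_of_derivation_eq_zero {K E : Type*} [CommRing K] [Field E] [Algebra K E]
    (h : ∀ d : Derivation K E E, d = 0) : Algebra.FormallyUnramified K E := by
  have hD (e : E) : KaehlerDifferential.D K E e = 0 :=
    (Module.forall_dual_apply_eq_zero_iff E _).1 fun φ =>
      congrArg (fun d : Derivation K E E => d e) (h (φ.compDer (KaehlerDifferential.D K E)))
  constructor
  rw [← Submodule.subsingleton_iff E, ← subsingleton_iff_bot_eq_top,
    ← KaehlerDifferential.span_range_derivation, eq_comm, Submodule.span_eq_bot]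
  rintro _ ⟨e, rfl⟩
  exact hD e

theorem adjoin_range_codRestrict_eq_top {ι K L : Type*} [Field K] [Field L] [Algebra K L]
    (z : ι → L) :
    IntermediateField.adjoin K (Set.range fun i =>
      (⟨z i, IntermediateField.subset_adjoin K _ ⟨i, rfl⟩⟩ :
        IntermediateField.adjoin K (Set.range z))) = ⊤ := by
  apply IntermediateField.lift_injective
  rw [IntermediateField.lift_adjoin, IntermediateField.lift_top, ← Set.range_comp]
  rfl

section Jacobian

variable {ι : Type*} [Fintype ι] [DecidableEq ι]

theorem isAlgebraic_of_adjoin_eq_top_of_jacobian_ne_zero {K E : Type*} [Field K] [Field E]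
    [Algebra K E] {z : ι → E} (hz : IntermediateField.adjoin K (Set.range z) = ⊤)
    (F : ι → MvPolynomial ι K) (hF : ∀ i, MvPolynomial.aeval z (F i) = 0)
    (hJ : (Matrix.of fun i j => MvPolynomial.aeval z (MvPolynomial.pderiv j (F i))).det ≠ 0) :
    Algebra.IsAlgebraic K E := by
  have hder (d : Derivation K E E) : d = 0 := by
    have hdz : (fun i => d (z i)) = 0 := by
      refine Matrix.eq_zero_of_mulVec_eq_zero hJ (funext fun i => ?_)
      simpa [hF, Matrix.mulVec, dotProduct] using (derivation_aeval d z (F i)).symm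
    refine derivation_eq_zero_of_adjoin_eq_top hz d ?_
    rintro _ ⟨i, rfl⟩
    exact congrFun hdz i
  have : Algebra.FormallyUnramified K E := formallyUnramified_of_derivation_eq_zero hder
  have : Algebra.EssFiniteType K E := IntermediateField.fg_top_iff.1 <|
    hz ▸ IntermediateField.fg_adjoin_of_finite (Set.finite_range z)
  have : Algebra.IsSeparable K E := (Algebra.FormallyUnramified.iff_isSeparable K E).1 inferInstance
  infer_instance

theorem isAlgebraic_of_jacobian_ne_zero {R A : Type*}
    [CommRing R] [IsDomain R] [CommRing A] [IsDomain A] [Algebra R A]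
    [FaithfulSMul R A] (y : ι → A) (F : ι → MvPolynomial ι R)
    (hF : ∀ i, MvPolynomial.aeval y (F i) = 0)
    (hJ : (Matrix.of fun i j => MvPolynomial.aeval y (MvPolynomial.pderiv j (F i))).det ≠ 0)
    (i : ι) : IsAlgebraic R (y i) := by
  let K := FractionRing R
  let L := FractionRing A
  let : Algebra K L := FractionRing.liftAlgebra R L
  have : IsScalarTower R K L := FractionRing.isScalarTower_liftAlgebra R L
  let z : ι → L := fun i => algebraMap A L (y i)
  let E := IntermediateField.adjoin K (Set.range z)
  let z' : ι → E := fun i => ⟨z i, IntermediateField.subset_adjoin K _ ⟨i, rfl⟩⟩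
  have hinj : Function.Injective (algebraMap A L) := IsFractionRing.injective A L
  have hz (p : MvPolynomial ι R) : algebraMap E L
      (MvPolynomial.aeval z' (MvPolynomial.map (algebraMap R K) p)) =
        algebraMap A L (MvPolynomial.aeval y p) := by
    rw [← MvPolynomial.aeval_algebraMap_apply, ← MvPolynomial.aeval_algebraMap_apply,
      MvPolynomial.aeval_map_algebraMap]
    rfl
  have : Algebra.IsAlgebraic K E := by
    refine isAlgebraic_of_adjoin_eq_top_of_jacobian_ne_zero (adjoin_range_codRestrict_eq_top z)
      (fun i => MvPolynomial.map (algebraMap R K) (F i)) (fun i => ?_) fun h => hJ (hinj ?_)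
    · apply (algebraMap E L).injective
      rw [hz, hF, map_zero, map_zero]
    · rw [map_zero, ← map_zero (algebraMap E L), ← h, RingHom.map_det, RingHom.map_det]
      congr 1
      ext i j
      simp only [RingHom.mapMatrix_apply, Matrix.map_apply, Matrix.of_apply,
        MvPolynomial.pderiv_map]
      exact (hz _).symm
  have hK : IsAlgebraic K (z i) :=
    IntermediateField.isAlgebraic_iff.1 (Algebra.IsAlgebraic.isAlgebraic (z' i))
  exact (isAlgebraic_algebraMap_iff hinj).1 ((IsFractionRing.isAlgebraic_iff R K L).2 hK)

end Jacobian

theorem polynomial_algebraMap_powerSeries_injective (R : Type*) [CommSemiring R] :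
    Function.Injective (algebraMap (Polynomial R) (PowerSeries R)) := fun p q h =>
  Polynomial.coe_injective R (by simpa [PowerSeries.algebraMap_apply'] using h)

theorem isAlgebraic_of_contracting_system {ι R : Type*} [Finite ι] [CommRing R] [IsDomain R]
    (y : ι → PowerSeries R) (Φ : ι → MvPolynomial ι (Polynomial R))
    (hΦ : ∀ i, y i = MvPolynomial.aeval y (Φ i))
    (hd : ∀ i j, PowerSeries.constantCoeff
      (MvPolynomial.aeval y (MvPolynomial.pderiv j (Φ i))) = 0) (i : ι) :
    IsAlgebraic (Polynomial R) (y i) := by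
  classical
  have := Fintype.ofFinite ι
  have : FaithfulSMul (Polynomial R) (PowerSeries R) :=
    (faithfulSMul_iff_algebraMap_injective _ _).2 (polynomial_algebraMap_powerSeries_injective R)
  let J : Matrix ι ι (PowerSeries R) := Matrix.of fun i j =>
    MvPolynomial.aeval y (MvPolynomial.pderiv j (MvPolynomial.X i - Φ i))
  have hJ : (PowerSeries.constantCoeff (R := R)).mapMatrix J = 1 := by
    ext i j
    simp only [J, RingHom.mapMatrix_apply, Matrix.map_apply, Matrix.of_apply, map_sub, hd,
      sub_zero, MvPolynomial.pderiv_X, Pi.single_apply, Matrix.one_apply]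
    split_ifs <;> simp
  refine isAlgebraic_of_jacobian_ne_zero y (fun i => MvPolynomial.X i - Φ i)
    (fun i => by simp [← hΦ i]) (fun h : J.det = 0 => ?_) i
  have hdet := congrArg (PowerSeries.constantCoeff (R := R)) h
  rw [RingHom.map_det, hJ, Matrix.det_one, map_zero] at hdet
  exact one_ne_zero hdet

/-! ### Generating functions of weighted objects -/

section WeightGF

/-- There are only finitely many objects of each weight, so that they can be counted. -/
def FiniteLevels {A : Type*} (w : A → ℕ) : Prop := ∀ n, Finite {a // w a = n}

/-- The generating function, with coefficients in `R`, of a class of objects counted by weight.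
A weight attained infinitely often contributes the coefficient `Nat.card _ = 0`. -/
noncomputable def weightGF (R : Type*) [Semiring R] {A : Type*} (w : A → ℕ) : PowerSeries R :=
  PowerSeries.mk fun n => (Nat.card {a // w a = n} : R)

variable {R : Type*} {A B : Type*} {w : A → ℕ} {w' : B → ℕ}

theorem FiniteLevels.of_injective (hw : FiniteLevels w) {f : B → A} (hf : Function.Injective f)
    (h : ∀ b, w (f b) = w' b) : FiniteLevels w' := fun n =>
  have := hw n
  Finite.of_injective (fun b : {b // w' b = n} => (⟨f b, (h b).trans b.2⟩ : {a // w a = n}))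
    fun _ _ hab => Subtype.ext (hf (congrArg Subtype.val hab))

theorem FiniteLevels.subtype (hw : FiniteLevels w) (p : A → Prop) :
    FiniteLevels fun a : {a // p a} => w a :=
  hw.of_injective Subtype.val_injective fun _ => rfl

theorem weightGF_congr [Semiring R] (e : A ≃ B) (h : ∀ a, w' (e a) = w a) :
    weightGF R w = weightGF R w' := by
  ext n
  simp only [weightGF, PowerSeries.coeff_mk]
  rw [Nat.card_congr (e.subtypeEquiv (q := fun b => w' b = n) fun a => by rw [h])]

theorem constantCoeff_weightGF [Semiring R] (h : ∀ a, 0 < w a) :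
    PowerSeries.constantCoeff (weightGF R w) = 0 := by
  have : IsEmpty {a // w a = 0} := ⟨fun a => (h a.1).ne' a.2⟩
  simp [weightGF, ← PowerSeries.coeff_zero_eq_constantCoeff_apply]

theorem weightGF_eq_monomial_add [Semiring R] (k : ℕ) : weightGF R w =
    PowerSeries.monomial k (Nat.card {a // w a = k} : R) +
      weightGF R fun a : {a // w a ≠ k} => w a := by
  ext n
  simp only [weightGF, map_add, PowerSeries.coeff_mk, PowerSeries.coeff_monomial]
  split_ifs with hn
  · have : IsEmpty {a : {a // w a ≠ k} // w a = n} := ⟨fun a => a.1.2 (a.2.trans hn)⟩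
    rw [Nat.card_of_isEmpty (α := {a : {a // w a ≠ k} // w a = n}), hn, Nat.cast_zero, add_zero]
  · rw [zero_add, Nat.card_congr (Equiv.subtypeSubtypeEquivSubtype (p := fun a => w a ≠ k)
      (q := fun a => w a = n) fun h => h.trans_ne hn)]

section Sigma

variable {I : Type*} {F : I → Type*} {v : ∀ i, F i → ℕ}

/-- An object of weight `n` of a disjoint union is an object of weight `n` of one of the parts. -/
def sigmaWeightEquiv (v : ∀ i, F i → ℕ) (n : ℕ) :
    {p : Σ i, F i // v p.1 p.2 = n} ≃ Σ i, {a : F i // v i a = n} where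
  toFun p := ⟨p.1.1, p.1.2, p.2⟩
  invFun p := ⟨⟨p.1, p.2.1⟩, p.2.2⟩

theorem weightGF_sigma [Semiring R] [Fintype I] (hv : ∀ i, FiniteLevels (v i)) :
    weightGF R (fun p : Σ i, F i => v p.1 p.2) = ∑ i, weightGF R (v i) := by
  ext n
  have := fun i => hv i n
  simp only [weightGF, PowerSeries.coeff_mk, map_sum]
  rw [Nat.card_congr (sigmaWeightEquiv v n), Nat.card_sigma, Nat.cast_sum]

theorem weightGF_mem_eq_sum [Semiring R] (hw : FiniteLevels w) (f : A → I) (S : Set I)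
    [Fintype S] : (weightGF R fun a : {a // f a ∈ S} => w a) =
      ∑ i : S, weightGF R fun a : {a // f a = i} => w a :=
  (weightGF_congr (Equiv.sigmaSubtypeFiberEquivSubtype f fun _ => Iff.rfl).symm fun _ => rfl).trans
    (weightGF_sigma (v := fun (i : S) (a : {a // f a = i}) => w a) fun _ => hw.subtype _)

end Sigma

section Pi

variable {I : Type*} [Fintype I] {F : I → Type*} {v : ∀ i, F i → ℕ}

/-- A tuple of total weight `n` consists of a composition of `n` and of components of the weights
it prescribes. -/
noncomputable def piWeightEquiv [DecidableEq I] (v : ∀ i, F i → ℕ) (n : ℕ) :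
    {x : ∀ i, F i // ∑ i, v i (x i) = n} ≃
      Σ l : Finset.finsuppAntidiag (Finset.univ : Finset I) n, ∀ i, {a : F i // v i a = l.1 i} where
  toFun x := ⟨⟨Finsupp.equivFunOnFinite.symm fun i => v i (x.1 i), by
    simp [Finset.mem_finsuppAntidiag, x.2]⟩, fun i => ⟨x.1 i, rfl⟩⟩
  invFun p := ⟨fun i => (p.2 i).1, by
    simpa only [(p.2 _).2] using (Finset.mem_finsuppAntidiag.1 p.1.2).1⟩
  right_inv := by
    rintro ⟨⟨l, hl⟩, x⟩
    have h : (Finsupp.equivFunOnFinite.symm fun i => v i (x i).1) = l :=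
      Finsupp.ext fun i => (x i).2
    refine Sigma.ext (Subtype.ext h) (Function.hfunext rfl fun i j hij => ?_)
    obtain rfl := eq_of_heq hij
    exact (Subtype.heq_iff_coe_eq fun a => by simp [h]).2 rfl

theorem FiniteLevels.pi (hv : ∀ i, FiniteLevels (v i)) :
    FiniteLevels fun x : ∀ i, F i => ∑ i, v i (x i) := fun n => by
  classical
  have := fun i k => hv i k
  exact Finite.of_equiv _ (piWeightEquiv v n).symm

theorem weightGF_pi [CommSemiring R] (hv : ∀ i, FiniteLevels (v i)) :
    weightGF R (fun x : ∀ i, F i => ∑ i, v i (x i)) = ∏ i, weightGF R (v i) := by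
  classical
  have := fun i k => hv i k
  ext n
  rw [PowerSeries.coeff_prod]
  simp only [weightGF, PowerSeries.coeff_mk]
  rw [Nat.card_congr (piWeightEquiv v n), Nat.card_sigma]
  simp only [Nat.card_pi, Nat.cast_sum, Nat.cast_prod]
  exact Finset.sum_coe_sort (Finset.finsuppAntidiag (Finset.univ : Finset I) n)
    fun l => ∏ i, (Nat.card {a // v i a = l i} : R)

end Pi

end WeightGF

section Specification

theorem constantCoeff_aeval_pderiv_prod_X {ι R : Type*} [CommRing R] (y : ι → PowerSeries R)
    (hy : ∀ i, PowerSeries.constantCoeff (y i) = 0) {m : ℕ} (hm : 2 ≤ m) (c : Fin m → ι) (j : ι) :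
    PowerSeries.constantCoeff (MvPolynomial.aeval y (MvPolynomial.pderiv j
      (∏ i, (MvPolynomial.X (c i) : MvPolynomial ι (Polynomial R))))) = 0 := by
  obtain ⟨k, rfl⟩ := Nat.exists_eq_add_of_le' hm
  simp [Fin.prod_univ_succ, hy]

/-- The products of at least two factors make the defining equations of the generating functions
contracting. -/
theorem isAlgebraic_weightGF_of_specification {R τ : Type*} [CommRing R] [IsDomain R] [Finite τ]
    {X G : τ → Type*} [∀ t, Finite (G t)]
    {w : ∀ t, X t → ℕ} (hw : ∀ t, FiniteLevels (w t)) (hpos : ∀ t x, 0 < w t x)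
    (m : ∀ t, G t → ℕ) (hm : ∀ t g, 2 ≤ m t g) (c : ∀ t g, Fin (m t g) → τ)
    (e : ∀ t, (Σ g : G t, ∀ i, X (c t g i)) ≃ {x : X t // w t x ≠ 1})
    (he : ∀ t g x, w t (e t ⟨g, x⟩) = ∑ i, w (c t g i) (x i)) (t : τ) :
    IsAlgebraic (Polynomial R) (weightGF R (w t)) := by
  have := fun t => Fintype.ofFinite (G t)
  let y : τ → PowerSeries R := fun t => weightGF R (w t)
  let Φ : τ → MvPolynomial τ (Polynomial R) := fun t =>
    MvPolynomial.C (Polynomial.monomial 1 (Nat.card {x // w t x = 1} : R)) +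
      ∑ g : G t, ∏ i, MvPolynomial.X (c t g i)
  have hsystem (t : τ) : y t = MvPolynomial.aeval y (Φ t) := by
    have hcomposite : weightGF R (fun x : {x // w t x ≠ 1} => w t x) = ∑ g, ∏ i, y (c t g i) := by
      rw [← weightGF_congr (e t) fun p => he t p.1 p.2]
      refine (weightGF_sigma (v := fun g (x : ∀ i, X (c t g i)) => ∑ i, w (c t g i) (x i))
        fun g => FiniteLevels.pi fun i => hw _).trans ?_
      exact Finset.sum_congr rfl fun g _ => weightGF_pi fun i => hw _
    simp only [y, Φ, map_add, map_sum, map_prod, MvPolynomial.aeval_C, MvPolynomial.aeval_X,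
      PowerSeries.algebraMap_apply', Algebra.algebraMap_self, Polynomial.coe_monomial]
    rw [weightGF_eq_monomial_add 1, hcomposite, PowerSeries.map_id, id]
  refine isAlgebraic_of_contracting_system y Φ hsystem (fun t j => ?_) t
  have hy (t : τ) : PowerSeries.constantCoeff (y t) = 0 := constantCoeff_weightGF (hpos t)
  simp only [Φ, map_add, map_sum, MvPolynomial.pderiv_C, zero_add]
  exact Finset.sum_eq_zero fun g _ => constantCoeff_aeval_pderiv_prod_X y hy (hm t g) _ j

theorem forget_colours_injective {X τ S : Type*} (κ : X → τ) (m : S → ℕ)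
    (P : (Σ s, Fin (m s) → τ) → Prop) :
    Function.Injective fun p : Σ g : {g // P g}, ∀ i, {x // κ x = g.1.2 i} =>
      (⟨p.1.1.1, fun i => p.2 i⟩ : Σ s, Fin (m s) → X) := by
  rintro ⟨⟨⟨s, c⟩, hc⟩, x⟩ ⟨⟨⟨s', c'⟩, hc'⟩, x'⟩ h
  obtain ⟨rfl, hx⟩ := Sigma.mk.inj_iff.1 h
  have hx (i) : (x i : X) = x' i := congrFun (eq_of_heq hx) i
  obtain rfl : c = c' := funext fun i => (x i).2.symm.trans (hx i ▸ (x' i).2)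
  rw [show x = x' from funext fun i => Subtype.ext (hx i)]

/-- Splitting the objects by their colours `κ` turns the operations `op` into a specification. -/
theorem isAlgebraic_weightGF_of_local_operations {R X τ S : Type*} [CommRing R] [IsDomain R]
    [Finite τ] [Finite S] {w : X → ℕ} (hw : FiniteLevels w) (hpos : ∀ x, 0 < w x) (κ : X → τ)
    {m : S → ℕ} (hm : ∀ s, 2 ≤ m s) (adm : ∀ s, (Fin (m s) → X) → Prop)
    (op : ∀ s, (Fin (m s) → X) → X)
    (hadm : ∀ s x x', κ ∘ x = κ ∘ x' → adm s x → adm s x')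
    (hop : ∀ s x x', κ ∘ x = κ ∘ x' → κ (op s x) = κ (op s x'))
    (hweight : ∀ s x, w (op s x) = ∑ i, w (x i))
    (hinj : Set.InjOn (fun p : Σ s, Fin (m s) → X => op p.1 p.2) {p | adm p.1 p.2})
    (hsurj : ∀ x, w x ≠ 1 → ∃ s y, adm s y ∧ op s y = x) (t : τ) :
    IsAlgebraic (Polynomial R) (weightGF R fun x : {x // κ x = t} => w x) := by
  let G (t : τ) := {g : Σ s, Fin (m s) → τ // ∃ x, κ ∘ x = g.2 ∧ adm g.1 x ∧ κ (op g.1 x) = t}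
  let F (t : τ) (p : Σ g : G t, ∀ i, {x // κ x = g.1.2 i}) : Σ s, Fin (m s) → X :=
    ⟨p.1.1.1, fun i => p.2 i⟩
  have hF (t : τ) (p) : κ ∘ (F t p).2 = p.1.1.2 := funext fun i => (p.2 i).2
  have hFadm (t : τ) (p) : adm _ (F t p).2 := by
    obtain ⟨x, hx, hx', -⟩ := p.1.2
    exact hadm _ _ _ (hx.trans (hF t p).symm) hx'
  have hFcolour (t : τ) (p) : κ (op _ (F t p).2) = t := by
    obtain ⟨x, hx, -, hx'⟩ := p.1.2
    exact (hop _ _ _ ((hF t p).trans hx.symm)).trans hx'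
  have hcomposite (s : S) (x : Fin (m s) → X) : w (op s x) ≠ 1 := by
    have : m s ≤ ∑ i, w (x i) := by
      simpa using Finset.card_nsmul_le_sum Finset.univ (fun i => w (x i)) 1 fun i _ => hpos (x i)
    have := hm s
    rw [hweight]
    omega
  let Ψ (t : τ) (p : Σ g : G t, ∀ i, {x // κ x = g.1.2 i}) :
      {x : {x // κ x = t} // w x ≠ 1} := ⟨⟨op _ (F t p).2, hFcolour t p⟩, hcomposite _ _⟩
  have hΨ (t : τ) : Function.Bijective (Ψ t) := by
    refine ⟨fun p p' h => forget_colours_injective κ m _ ?_, ?_⟩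
    · exact hinj (hFadm t p) (hFadm t p') (congrArg (fun z => (z.1.1 : X)) h)
    · rintro ⟨⟨x, rfl⟩, hx⟩
      obtain ⟨s, y, hy, rfl⟩ := hsurj x hx
      exact ⟨⟨⟨⟨s, κ ∘ y⟩, y, rfl, hy, rfl⟩, fun i => ⟨y i, rfl⟩⟩, rfl⟩
  exact isAlgebraic_weightGF_of_specification (G := G) (fun t => hw.subtype (κ · = t))
    (fun t x => hpos x) (fun t g => m g.1.1) (fun t g => hm _) (fun t g => g.1.2)
    (fun t => Equiv.ofBijective (Ψ t) (hΨ t)) (fun t g x => hweight _ (F t ⟨g, x⟩).2) t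

end Specification

/-! ### Patterns and block maps -/

section Order

variable {α β : Type*} [LinearOrder α] [PartialOrder β]

theorem ordConnected_image_of_monotone {f : α → β} (hf : Monotone f)
    (hsurj : Function.Surjective f) {A : Set α} (hA : A.OrdConnected) : (f '' A).OrdConnected := by
  refine ⟨?_⟩
  rintro _ ⟨a, ha, rfl⟩ _ ⟨b, hb, rfl⟩ y ⟨hay, hyb⟩
  obtain ⟨c, rfl⟩ := hsurj y
  rcases le_total c a with hca | hac
  · exact ⟨a, ha, hay.antisymm (hf hca)⟩
  rcases le_total b c with hbc | hcb
  · exact ⟨b, hb, (hf hbc).antisymm hyb⟩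
  · exact ⟨c, hA.out ha hb ⟨hac, hcb⟩, rfl⟩

theorem ordConnected_ne_of_monotone {f : α → β} (hf : Monotone f) {K : Set α}
    (hK : K.OrdConnected) {c : α} (hc : c ∉ K) (hsub : ∀ p, f p ≠ f c → p ∈ K) :
    {p | f p ≠ f c}.OrdConnected := by
  refine ⟨fun p hp r hr q ⟨hpq, hqr⟩ hq => hc (hK.out (hsub p hp) (hsub r hr) ⟨?_, ?_⟩)⟩
  · exact le_of_not_ge fun hcp => hp (((hf hpq).trans_eq hq).antisymm (hf hcp))
  · exact le_of_not_ge fun hrc => hr ((hf hrc).antisymm (hq.symm.trans_le (hf hqr)))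

theorem eq_or_eq_of_rectangle {γ : Type*} [PartialOrder γ] {f : α → β} {g : α → γ}
    (hf : Monotone f) (hg : Monotone g) {a b c p : α} (hfa : f a = f p) (hga : g a = g c)
    (hfb : f b = f c) (hgb : g b = g p) : f p = f c ∨ g p = g c := by
  by_contra! hne
  rcases le_total p c with h | h
  · have hab : a < b := hf.reflect_lt (hfa ▸ hfb ▸ (hf h).lt_of_ne hne.1)
    exact hab.asymm (hg.reflect_lt (hga ▸ hgb ▸ (hg h).lt_of_ne hne.2))
  · have hba : b < a := hf.reflect_lt (hfa ▸ hfb ▸ (hf h).lt_of_ne hne.1.symm)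
    exact hba.asymm (hg.reflect_lt (hga ▸ hgb ▸ (hg h).lt_of_ne hne.2.symm))

open Classical in
theorem monotone_collapse {A : Set α} (hA : A.OrdConnected) {a : α} (ha : a ∈ A) :
    Monotone fun x => if x ∈ A then a else x := by
  intro x y hxy
  by_cases hx : x ∈ A <;> by_cases hy : y ∈ A <;> simp only [hx, hy, if_true, if_false, le_refl]
  · exact le_of_not_ge fun hya => hy (hA.out hx ha ⟨hxy, hya⟩)
  · exact le_of_not_ge fun hax => hx (hA.out ha hy ⟨hax, hxy⟩)
  · exact hxy

theorem exists_equiv_fin_lt_iff_lt {A L : Type*} [Finite A] [LinearOrder L] {n : ℕ}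
    (hn : Nat.card A = n) {key : A → L} (hkey : Function.Injective key) :
    ∃ e : A ≃ Fin n, ∀ a b, e a < e b ↔ key a < key b := by
  have := Fintype.ofFinite A
  let := LinearOrder.lift' key hkey
  let e := Fintype.orderIsoFinOfCardEq A (Nat.card_eq_fintype_card.symm.trans hn)
  exact ⟨e.symm.toEquiv, fun a b => e.symm.lt_iff_lt⟩

end Order

/-- A permutation of unspecified length. -/
abbrev AnyPerm := Σ n, Perm n

theorem Perm.ext_of_lt_iff {n : ℕ} {σ τ : Perm n} (h : ∀ s t, σ s < σ t ↔ τ s < τ t) : σ = τ := by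
  have hmono : StrictMono (τ ∘ σ.symm) := fun a b hab => (h _ _).1 (by simpa)
  have hid : τ ∘ σ.symm = id :=
    (hmono.range_inj strictMono_id).1 (by simp [Set.range_comp])
  ext s
  simpa using congrArg Fin.val (congrFun hid (σ s)).symm

section Pattern

variable {N k : ℕ} {π : Perm N} {A : Set (Fin N)}

/-- `α` is the pattern formed by the entries of `π` at the positions in `A`. -/
def IsPattern (π : Perm N) (A : Set (Fin N)) (α : Perm k) : Prop :=
  ∃ h : Fin k → Fin N, StrictMono h ∧ Set.range h = A ∧ ∀ s t, π (h s) < π (h t) ↔ α s < α t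

theorem exists_isPattern (π : Perm N) (A : Set (Fin N)) : ∃ x : AnyPerm, IsPattern π A x.2 := by
  obtain ⟨e, he⟩ := exists_equiv_fin_lt_iff_lt (A := A) rfl Subtype.val_injective
  obtain ⟨e', he'⟩ :=
    exists_equiv_fin_lt_iff_lt (A := A) rfl (π.injective.comp Subtype.val_injective)
  refine ⟨⟨_, e.symm.trans e'⟩, fun s => e.symm s, fun s t hst => ?_, ?_, fun s t => ?_⟩
  · exact (he _ _).1 (by rwa [e.apply_symm_apply, e.apply_symm_apply])
  · exact (e.symm.surjective.range_comp _).trans Subtype.range_coe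
  · exact (he' _ _).symm

theorem IsPattern.unique {x y : AnyPerm} (hx : IsPattern π A x.2) (hy : IsPattern π A y.2) :
    x = y := by
  obtain ⟨k, α⟩ := x
  obtain ⟨l, β⟩ := y
  obtain ⟨h, hmono, hrange, hlt⟩ := hx
  obtain ⟨h', hmono', hrange', hlt'⟩ := hy
  obtain rfl : k = l := by
    simpa [hrange, hrange'] using (Set.ncard_range_of_injective hmono.injective).symm.trans
      ((congrArg Set.ncard (hrange.trans hrange'.symm)).trans
        (Set.ncard_range_of_injective hmono'.injective))
  obtain rfl : h = h' := (hmono.range_inj hmono').1 (hrange.trans hrange'.symm)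
  obtain rfl : α = β := Perm.ext_of_lt_iff fun s t => (hlt s t).symm.trans (hlt' s t)
  rfl

theorem IsPattern.contains {α : Perm k} (h : IsPattern π A α) : Contains α π :=
  let ⟨g, hmono, _, hlt⟩ := h
  ⟨g, hmono, hlt⟩

end Pattern

/-- `f` exhibits `π` as an inflation of `σ`, without naming the inflating permutations: the block
of an entry is weakly increasing in its position, and the value of that block in `σ` is weakly
increasing in the value of the entry. -/
structure IsBlockMap {N m : ℕ} (π : Perm N) (σ : Perm m) (f : Fin N → Fin m) : Prop where
  surjective : Function.Surjective f
  monotone : Monotone f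
  monotone_value : Monotone fun v => σ (f (π.symm v))

namespace IsBlockMap

variable {N m m' k : ℕ} {π : Perm N} {σ : Perm m} {σ' : Perm m'} {f : Fin N → Fin m}
  {f' : Fin N → Fin m'}

theorem id (π : Perm N) : IsBlockMap π π _root_.id :=
  ⟨Function.surjective_id, monotone_id, fun v w h => by simpa⟩

theorem comp {g : Fin m → Fin m'} (hg : IsBlockMap σ σ' g) (hf : IsBlockMap π σ f) :
    IsBlockMap π σ' (g ∘ f) :=
  ⟨hg.surjective.comp hf.surjective, hg.monotone.comp hf.monotone, fun v w h => by
    simpa using hg.monotone_value (hf.monotone_value h)⟩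

theorem lt_of_lt (hf : IsBlockMap π σ f) {p q : Fin N} (h : f p < f q) : p < q :=
  hf.monotone.reflect_lt h

theorem apply_lt_iff (hf : IsBlockMap π σ f) {p q : Fin N} (h : f p ≠ f q) :
    π p < π q ↔ σ (f p) < σ (f q) := by
  refine ⟨fun hpq => ?_, fun hpq => hf.monotone_value.reflect_lt (by simpa using hpq)⟩
  exact (show σ (f p) ≤ σ (f q) by simpa using hf.monotone_value hpq.le).lt_of_ne
    (σ.injective.ne h)

theorem of_lt_iff_lt (hsurj : Function.Surjective f)
    (hlt : ∀ p q, f p < f q → p < q ∧ (π p < π q ↔ σ (f p) < σ (f q))) : IsBlockMap π σ f := by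
  refine ⟨hsurj, fun p q hpq => ?_, fun v w hvw => ?_⟩
  · exact le_of_not_gt fun h => hpq.not_gt (hlt _ _ h).1
  obtain ⟨p, rfl⟩ := π.surjective v
  obtain ⟨q, rfl⟩ := π.surjective w
  simp only [Equiv.symm_apply_apply]
  rcases lt_trichotomy (f p) (f q) with h | h | h
  · exact ((hlt _ _ h).2.1 (hvw.lt_of_ne (π.injective.ne (hlt _ _ h).1.ne))).le
  · rw [h]
  · exact le_of_not_gt fun h' => hvw.not_gt ((hlt _ _ h).2.2 h')

theorem contains (hf : IsBlockMap π σ f) : Contains σ π := by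
  obtain ⟨r, hr⟩ := hf.surjective.hasRightInverse
  refine ⟨r, fun i j h => hf.lt_of_lt (by rwa [hr, hr]), fun s t => ?_⟩
  rcases eq_or_ne s t with rfl | hst
  · simp
  · rw [hf.apply_lt_iff (by rwa [hr, hr]), hr, hr]

theorem comp_occurrence (hf : IsBlockMap π σ f) {α : Perm k} {h : Fin k → Fin N}
    (hmono : StrictMono h) (hlt : ∀ s t, π (h s) < π (h t) ↔ α s < α t)
    (hsurj : Function.Surjective (f ∘ h)) : IsBlockMap α σ (f ∘ h) :=
  .of_lt_iff_lt hsurj fun s t hst => ⟨hmono.lt_iff_lt.1 (hf.lt_of_lt hst),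
    (hlt s t).symm.trans (hf.apply_lt_iff hst.ne)⟩

end IsBlockMap

/-! ### Uniqueness of the simple quotient -/

theorem eq_of_monotone_of_fibres_eq {P : Type*} [LinearOrder P] {m m' : ℕ} {f : P → Fin m}
    {f' : P → Fin m'} (hf : Monotone f) (hf' : Monotone f') (hsurj : Function.Surjective f)
    (hsurj' : Function.Surjective f') (h : ∀ p q, f p = f q ↔ f' p = f' q) :
    m = m' ∧ ∀ p, (f p : ℕ) = f' p := by
  obtain ⟨r, hr⟩ := hsurj.hasRightInverse
  have hfr (p) : f' (r (f p)) = f' p := (h _ _).1 (hr _)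
  have hmono : StrictMono (f' ∘ r) := fun i j hij =>
    (hf' (hf.reflect_lt (by rwa [hr, hr])).le).lt_of_ne fun heq =>
      hij.ne (by simpa [hr i, hr j] using (h _ _).2 heq)
  have hcomp : Function.Surjective (f' ∘ r) := fun j => by
    obtain ⟨p, rfl⟩ := hsurj' j
    exact ⟨f p, hfr p⟩
  obtain rfl : m = m' := by
    simpa using Fintype.card_of_bijective ⟨hmono.injective, hcomp⟩
  have hid : f' ∘ r = id :=
    (hmono.range_inj strictMono_id).1 (by rw [hcomp.range_eq, Set.range_id])
  exact ⟨rfl, fun p => congrArg Fin.val ((congrFun hid (f p)).symm.trans (hfr p))⟩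

theorem IsBlockMap.eq_of_fibres_eq {N m m' : ℕ} {π : Perm N} {σ : Perm m} {σ' : Perm m'}
    {f : Fin N → Fin m} {f' : Fin N → Fin m'} (hf : IsBlockMap π σ f) (hf' : IsBlockMap π σ' f')
    (h : ∀ p q, f p = f q ↔ f' p = f' q) :
    (⟨m, σ⟩ : AnyPerm) = ⟨m', σ'⟩ ∧ ∀ p, (f p : ℕ) = f' p := by
  obtain ⟨rfl, hff⟩ :=
    eq_of_monotone_of_fibres_eq hf.monotone hf'.monotone hf.surjective hf'.surjective h
  obtain rfl : f = f' := funext fun p => Fin.ext (hff p)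
  refine ⟨congrArg (Sigma.mk m) (Perm.ext_of_lt_iff fun s t => ?_), hff⟩
  obtain ⟨p, rfl⟩ := hf.surjective s
  obtain ⟨q, rfl⟩ := hf.surjective t
  by_cases hpq : f p = f q
  · simp [hpq]
  · exact (hf.apply_lt_iff hpq).symm.trans (hf'.apply_lt_iff hpq)

/-- The set of positions `A` is an interval of `π` in the sense of `IsPermInterval`. -/
def IsBiconvex {N : ℕ} (π : Perm N) (A : Set (Fin N)) : Prop :=
  A.OrdConnected ∧ (π '' A).OrdConnected

theorem isRange_iff_ordConnected {n : ℕ} {I : Finset (Fin n)} :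
    IsRange I ↔ (I : Set (Fin n)).OrdConnected :=
  ⟨fun h => ⟨fun _ hi _ hl _ hj => h hi hl hj.1 hj.2⟩,
    fun h _ _ _ hi hl hij hjl => h.out hi hl ⟨hij, hjl⟩⟩

theorem isPermInterval_iff_isBiconvex {n : ℕ} {π : Perm n} {I : Finset (Fin n)} :
    IsPermInterval π I ↔ IsBiconvex π I := by
  rw [IsPermInterval, IsBiconvex, isRange_iff_ordConnected, isRange_iff_ordConnected,
    Finset.coe_image]

theorem isSimple_iff {n : ℕ} {π : Perm n} :
    IsSimple π ↔ ∀ A, IsBiconvex π A → A.Subsingleton ∨ A = Set.univ := by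
  have hsize (I : Finset (Fin n)) :
      I.card ≤ 1 ∨ I.card = n ↔ (I : Set (Fin n)).Subsingleton ∨ (I : Set (Fin n)) = .univ := by
    rw [Finset.card_le_one_iff_subsingleton, Finset.coe_eq_univ, ← Finset.card_eq_iff_eq_univ,
      Fintype.card_fin]
  simp only [IsSimple, isPermInterval_iff_isBiconvex, hsize]
  refine ⟨fun h A hA => ?_, fun h I => h I⟩
  lift A to Finset (Fin n) using A.toFinite
  exact h A hA

namespace IsBlockMap

variable {N m m' : ℕ} {π : Perm N} {σ : Perm m} {σ' : Perm m'} {f : Fin N → Fin m}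
  {f' : Fin N → Fin m'}

theorem isBiconvex_image (hf : IsBlockMap π σ f) {A : Set (Fin N)} (hA : IsBiconvex π A) :
    IsBiconvex σ (f '' A) := by
  refine ⟨ordConnected_image_of_monotone hf.monotone hf.surjective hA.1, ?_⟩
  have hsurj : Function.Surjective fun v => σ (f (π.symm v)) :=
    σ.surjective.comp (hf.surjective.comp π.symm.surjective)
  simpa [Set.image_image] using ordConnected_image_of_monotone hf.monotone_value hsurj hA.2

theorem isBiconvex_fibre (hf : IsBlockMap π σ f) (i : Fin m) : IsBiconvex π (f ⁻¹' {i}) := by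
  refine ⟨Set.ordConnected_singleton.preimage_mono hf.monotone, ?_⟩
  convert (Set.ordConnected_singleton (a := σ i)).preimage_mono hf.monotone_value using 1
  ext v
  simp [Equiv.image_eq_preimage_symm]

theorem isBiconvex_ne (hf : IsBlockMap π σ f) {K : Set (Fin N)} (hK : IsBiconvex π K)
    {c : Fin N} (hc : c ∉ K) (hsub : ∀ p, f p ≠ f c → p ∈ K) : IsBiconvex π {p | f p ≠ f c} := by
  refine ⟨ordConnected_ne_of_monotone hf.monotone hK.1 hc hsub, ?_⟩
  convert ordConnected_ne_of_monotone hf.monotone_value hK.2 (c := π c) (by simpa) fun v hv =>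
    ⟨π.symm v, hsub _ (by simpa using hv), by simp⟩ using 1
  ext v
  simp [Equiv.image_eq_preimage_symm]

theorem fibres_eq_of_refines (hf : IsBlockMap π σ f) (hf' : IsBlockMap π σ' f')
    (hσ' : IsSimple σ') (hm : 2 ≤ m) (h : ∀ p q, f' p = f' q → f p = f q) (p q : Fin N) :
    f p = f q ↔ f' p = f' q := by
  refine ⟨fun hpq => ?_, h p q⟩
  rcases isSimple_iff.1 hσ' _ (hf'.isBiconvex_image (hf.isBiconvex_fibre (f q))) with hsub | huniv
  · exact hsub ⟨p, hpq, rfl⟩ ⟨q, rfl, rfl⟩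
  · have hconst (r) : f r = f q := by
      obtain ⟨r', hr', hrr'⟩ : f' r ∈ f' '' (f ⁻¹' {f q}) := huniv ▸ Set.mem_univ _
      exact (h _ _ hrr').symm.trans hr'
    have : Nontrivial (Fin m) := Fin.nontrivial_iff_two_le.2 hm
    obtain ⟨i, hi⟩ := exists_ne (f q)
    obtain ⟨r, rfl⟩ := hf.surjective i
    exact absurd (hconst r) hi

theorem image_fibre_eq_univ (hf : IsBlockMap π σ f) (hf' : IsBlockMap π σ' f') (hσ : IsSimple σ)
    {p q : Fin N} (h' : f' p = f' q) (h : f p ≠ f q) : f '' (f' ⁻¹' {f' p}) = .univ :=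
  (isSimple_iff.1 hσ _ (hf.isBiconvex_image (hf'.isBiconvex_fibre _))).resolve_left fun hsub =>
    h (hsub ⟨p, rfl, rfl⟩ ⟨q, h'.symm, rfl⟩)

/-- By the rectangle argument the two blocks cover all positions, so the complement of the block
`j` is convex and has convex image `{j}ᶜ`. -/
theorem eq_two_of_image_eq_univ (hf : IsBlockMap π σ f) (hf' : IsBlockMap π σ' f')
    (hσ' : IsSimple σ') (hm : 2 ≤ m) (hm' : 2 ≤ m') {i : Fin m} {j : Fin m'}
    (hj : f '' (f' ⁻¹' {j}) = .univ) (hi : f' '' (f ⁻¹' {i}) = .univ) : m' = 2 := by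
  have hmeet (i') : ∃ p, f' p = j ∧ f p = i' := (hj ▸ Set.mem_univ i' : i' ∈ f '' (f' ⁻¹' {j}))
  have hmeet' (j') : ∃ p, f p = i ∧ f' p = j' := (hi ▸ Set.mem_univ j' : j' ∈ f' '' (f ⁻¹' {i}))
  have hcover (p) (hp : f' p ≠ j) : f p = i := by
    obtain ⟨c, hc', hc⟩ := hmeet i
    obtain ⟨a, ha', ha⟩ := hmeet (f p)
    obtain ⟨b, hb, hb'⟩ := hmeet' (f' p)
    exact ((eq_or_eq_of_rectangle hf.monotone hf'.monotone ha (ha'.trans hc'.symm)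
      (hb.trans hc.symm) hb').resolve_right (hc' ▸ hp)).trans hc
  have : Nontrivial (Fin m) := Fin.nontrivial_iff_two_le.2 hm
  obtain ⟨i', hi'⟩ := exists_ne i
  obtain ⟨c, rfl, rfl⟩ := hmeet i'
  have hcompl := hf'.isBiconvex_image (hf'.isBiconvex_ne (hf.isBiconvex_fibre i) hi' hcover)
  have himage : f' '' {p | f' p ≠ f' c} = {f' c}ᶜ :=
    Set.image_preimage_eq ({f' c}ᶜ) hf'.surjective
  rw [himage] at hcompl
  rcases isSimple_iff.1 hσ' _ hcompl with hsub | huniv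
  · have hcard : ({f' c}ᶜ : Finset (Fin m')).card ≤ 1 :=
      Finset.card_le_one_iff_subsingleton.2 (by simpa using hsub)
    rw [Finset.card_compl, Finset.card_singleton, Fintype.card_fin] at hcard
    omega
  · exact absurd rfl (huniv ▸ Set.mem_univ (f' c) : f' c ∈ ({f' c}ᶜ : Set (Fin m')))

theorem eq_of_two [NeZero N] {σ τ : Perm 2} {f g : Fin N → Fin 2} (hf : IsBlockMap π σ f)
    (hg : IsBlockMap π τ g) : σ = τ := by
  have h0 {σ : Perm 2} {f : Fin N → Fin 2} (hf : IsBlockMap π σ f) : f ⊥ = 0 := by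
    obtain ⟨p, hp⟩ := hf.surjective 0
    exact le_antisymm ((hf.monotone bot_le).trans_eq hp) (Fin.zero_le _)
  have h1 {σ : Perm 2} {f : Fin N → Fin 2} (hf : IsBlockMap π σ f) : f ⊤ = 1 := by
    obtain ⟨p, hp⟩ := hf.surjective 1
    exact le_antisymm (Fin.le_last _) (hp.symm.trans_le (hf.monotone le_top))
  have hlt : σ 0 < σ 1 ↔ τ 0 < τ 1 := by
    have hf' := hf.apply_lt_iff (p := ⊥) (q := ⊤) (by simp [h0 hf, h1 hf])
    have hg' := hg.apply_lt_iff (p := ⊥) (q := ⊤) (by simp [h0 hg, h1 hg])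
    rw [h0 hf, h1 hf] at hf'
    rw [h0 hg, h1 hg] at hg'
    exact hf'.symm.trans hg'
  have hdetermined : ∀ σ τ : Perm 2, (σ 0 < σ 1 ↔ τ 0 < τ 1) → σ = τ := by decide
  exact hdetermined σ τ hlt

theorem unique_of_isSimple (hf : IsBlockMap π σ f) (hf' : IsBlockMap π σ' f')
    (hσ : IsSimple σ) (hσ' : IsSimple σ') (hm : 2 ≤ m) (hm' : 2 ≤ m') :
    (⟨m, σ⟩ : AnyPerm) = ⟨m', σ'⟩ ∧ (m ≠ 2 → ∀ p, (f p : ℕ) = f' p) := by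
  by_cases h : ∀ p q, f' p = f' q → f p = f q
  · have := hf.eq_of_fibres_eq hf' (hf.fibres_eq_of_refines hf' hσ' hm h)
    exact ⟨this.1, fun _ => this.2⟩
  by_cases h' : ∀ p q, f p = f q → f' p = f' q
  · have := hf'.eq_of_fibres_eq hf (hf'.fibres_eq_of_refines hf hσ hm' h')
    exact ⟨this.1.symm, fun _ p => (this.2 p).symm⟩
  push Not at h h'
  obtain ⟨p, q, hpq', hpq⟩ := h
  obtain ⟨p', q', hpq₂, hpq₂'⟩ := h'
  have hj := hf.image_fibre_eq_univ hf' hσ hpq' hpq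
  have hi := hf'.image_fibre_eq_univ hf hσ' hpq₂ hpq₂'
  obtain rfl := hf.eq_two_of_image_eq_univ hf' hσ' hm hm' hj hi
  obtain rfl := hf'.eq_two_of_image_eq_univ hf hσ hm' hm hi hj
  have : NeZero N := ⟨p.pos.ne'⟩
  exact ⟨by rw [hf.eq_of_two hf'], fun hne => absurd rfl hne⟩

end IsBlockMap

/-! ### Existence and uniqueness of decompositions -/

theorem exists_isBlockMap_of_monotone {N : ℕ} (π : Perm N) {L L' : Type*} [LinearOrder L]
    [LinearOrder L'] {c : Fin N → L} {d : Fin N → L'} (hc : Monotone c) (hd : Monotone d)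
    (hcd : ∀ p q, c p = c q ↔ d (π p) = d (π q)) :
    ∃ (s : AnyPerm) (f : Fin N → Fin s.1), IsBlockMap π s.2 f ∧ ∀ p q, f p = f q ↔ c p = c q := by
  let A := Quotient (Setoid.ker c)
  let block : Fin N → A := Quotient.mk _
  have hblock : Function.Surjective block := Quotient.mk_surjective
  have hker (p q) : block p = block q ↔ c p = c q := Quotient.eq
  let value : A → L' := Quotient.lift (d ∘ π) fun p q h => (hcd p q).1 h
  have hvalue : Function.Injective value := by
    rintro ⟨p⟩ ⟨q⟩ h
    exact (hker p q).2 ((hcd p q).2 h)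
  obtain ⟨e, he⟩ := exists_equiv_fin_lt_iff_lt rfl (Setoid.kerLift_injective c)
  obtain ⟨e', he'⟩ := exists_equiv_fin_lt_iff_lt rfl hvalue
  refine ⟨⟨_, e.symm.trans e'⟩, e ∘ block, ⟨e.surjective.comp hblock, fun p q hpq => ?_,
    fun v w hvw => ?_⟩, fun p q => by simp [hker]⟩
  · exact le_of_not_gt fun h => (hc hpq).not_gt ((he _ _).1 h)
  · refine le_of_not_gt fun h => (hd hvw).not_gt ?_
    simpa [he', value, block] using h

theorem exists_isBlockMap_lt_of_not_isSimple {m : ℕ} {σ : Perm m} (hσ : ¬ IsSimple σ) :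
    ∃ (s : AnyPerm) (g : Fin m → Fin s.1), IsBlockMap σ s.2 g ∧ 2 ≤ s.1 ∧ s.1 < m := by
  classical
  simp only [isSimple_iff, not_forall, not_or, Set.not_subsingleton_iff] at hσ
  obtain ⟨A, hA, ⟨a, ha, b, hb, hab⟩, huniv⟩ := hσ
  obtain ⟨z, hz⟩ := (Set.ne_univ_iff_exists_notMem A).1 huniv
  let c : Fin m → Fin m := fun x => if x ∈ A then a else x
  let d : Fin m → Fin m := fun v => if v ∈ σ '' A then σ a else v
  have hcd (x) : d (σ x) = σ (c x) := by
    by_cases hx : x ∈ A <;> simp [c, d, hx]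
  obtain ⟨s, g, hg, hgc⟩ := exists_isBlockMap_of_monotone σ (c := c) (d := d)
    (monotone_collapse hA.1 ha) (monotone_collapse hA.2 (Set.mem_image_of_mem σ ha))
    fun p q => by rw [hcd, hcd, σ.apply_eq_iff_eq]
  have hgaz : g a ≠ g z := fun h => hz <| by
    have hcaz : a = z := by simpa [c, ha, hz] using (hgc a z).1 h
    exact hcaz ▸ ha
  have hgab : g a = g b := (hgc a b).2 (by simp [c, hb])
  refine ⟨s, g, hg, Fin.nontrivial_iff_two_le.1 ⟨_, _, hgaz⟩, ?_⟩
  simpa using Fintype.card_lt_of_surjective_not_injective g hg.surjective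
    fun hinj => hab (hinj hgab)

theorem exists_isSimple_isBlockMap {N : ℕ} (π : Perm N) (hN : 2 ≤ N) :
    ∃ (s : AnyPerm) (f : Fin N → Fin s.1), IsBlockMap π s.2 f ∧ IsSimple s.2 ∧ 2 ≤ s.1 := by
  induction N using Nat.strong_induction_on with
  | _ N ih =>
    by_cases hπ : IsSimple π
    · exact ⟨⟨N, π⟩, id, .id π, hπ, hN⟩
    · obtain ⟨s, g, hg, hs, hlt⟩ := exists_isBlockMap_lt_of_not_isSimple hπ
      obtain ⟨s', f, hf, hsimple, hs'⟩ := ih s.1 hlt s.2 hs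
      exact ⟨s', f ∘ g, hf.comp hg, hsimple, hs'⟩

/-- `π` is an inflation of `σ` by some nonempty permutations. -/
def IsInflationOf {N m : ℕ} (σ : Perm m) (π : Perm N) : Prop :=
  ∃ f : Fin N → Fin m, IsBlockMap π σ f

namespace IsBlockMap

variable {N k : ℕ} {π : Perm N} {σ : Perm 2} {f g : Fin N → Fin 2} {α : Perm k}

theorem exists_smaller_first_block (hf : IsBlockMap π σ f) (hα : IsPattern π (f ⁻¹' {0}) α)
    (hs : IsInflationOf σ α) : ∃ g : Fin N → Fin 2, IsBlockMap π σ g ∧ g ⁻¹' {0} ⊂ f ⁻¹' {0} := by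
  classical
  obtain ⟨h, hmono, hrange, hlt⟩ := hα
  obtain ⟨g, hg⟩ := hs
  have hf0 (s) : f (h s) = 0 := hrange.subset ⟨s, rfl⟩
  let B := h '' (g ⁻¹' {0})
  let F : Fin N → Fin 2 := fun p => if p ∈ B then 0 else 1
  have hF (p) : F p = 0 ↔ p ∈ B := by simp [F]
  obtain ⟨a, ha⟩ := hg.surjective 0
  obtain ⟨b, hb⟩ := hg.surjective 1
  have hhb : h b ∉ B := by simp [B, hmono.injective.eq_iff, hb]
  refine ⟨F, .of_lt_iff_lt (fun i => ?_) fun p q hpq => ?_, ?_⟩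
  · fin_cases i
    · exact ⟨h a, if_pos ⟨a, ha, rfl⟩⟩
    · exact ⟨h b, if_neg hhb⟩
  · have hp : F p = 0 := by omega
    have hq : F q = 1 := by omega
    rw [hp, hq]
    obtain ⟨s, hs : g s = 0, rfl⟩ := (hF p).1 hp
    by_cases hfq : f q = 0
    · obtain ⟨t, rfl⟩ := hrange.superset hfq
      have ht : g t = 1 := Fin.eq_one_of_ne_zero _ fun ht => by simp [(hF _).2 ⟨t, ht, rfl⟩] at hq
      have hst : g s < g t := by simp [hs, ht]
      exact ⟨hmono (hg.lt_of_lt hst), by rw [hlt, hg.apply_lt_iff hst.ne, hs, ht]⟩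
    · have hfq : f q = 1 := Fin.eq_one_of_ne_zero _ hfq
      have hsq : f (h s) < f q := by simp [hf0, hfq]
      exact ⟨hf.lt_of_lt hsq, by rw [hf.apply_lt_iff hsq.ne, hf0, hfq]⟩
  · refine (Set.ssubset_iff_of_subset fun p hp => ?_).2 ⟨h b, hf0 b, fun hb => hhb ((hF _).1 hb)⟩
    obtain ⟨s, -, rfl⟩ := (hF p).1 hp
    exact hf0 s

theorem first_block_subset (hf : IsBlockMap π σ f) (hg : IsBlockMap π σ g)
    (hα : IsPattern π (g ⁻¹' {0}) α) (hind : ¬ IsInflationOf σ α) : g ⁻¹' {0} ⊆ f ⁻¹' {0} := by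
  intro p (hp : g p = 0)
  by_contra hfp
  have hfp : f p = 1 := Fin.eq_one_of_ne_zero _ hfp
  obtain ⟨q, hq⟩ := hf.surjective 0
  have hqp : q < p := hf.lt_of_lt (by simp [hfp, hq])
  have hgq : g q = 0 := le_antisymm (hp ▸ hg.monotone hqp.le) (Fin.zero_le _)
  obtain ⟨h, hmono, hrange, hlt⟩ := hα
  obtain ⟨a, rfl⟩ := hrange.superset hp
  obtain ⟨b, rfl⟩ := hrange.superset hgq
  refine hind ⟨f ∘ h, hf.comp_occurrence hmono hlt fun i => ?_⟩
  fin_cases i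
  · exact ⟨b, hq⟩
  · exact ⟨a, hfp⟩

end IsBlockMap

/-- `f` exhibits `π` as the inflation of `σ` by the permutations `x i`; see
`IsDecomposition.isInflation`. -/
structure IsDecomposition {N m : ℕ} (π : Perm N) (σ : Perm m) (x : Fin m → AnyPerm)
    (f : Fin N → Fin m) : Prop where
  isBlockMap : IsBlockMap π σ f
  isPattern : ∀ i, IsPattern π (f ⁻¹' {i}) (x i).2

theorem IsBlockMap.exists_isDecomposition {N m : ℕ} {π : Perm N} {σ : Perm m} {f : Fin N → Fin m}
    (hf : IsBlockMap π σ f) : ∃ x, IsDecomposition π σ x f := by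
  choose x hx using fun i => exists_isPattern π (f ⁻¹' {i})
  exact ⟨x, hf, hx⟩

/-- When `σ` has length two, the first block is not itself an inflation of `σ`. This is the usual
normalization making the decomposition of a sum or skew sum unique: the first block is chosen
indecomposable. -/
def IsAdmissible {m : ℕ} (σ : Perm m) (x : Fin m → AnyPerm) : Prop :=
  m = 2 → ∀ i : Fin m, (i : ℕ) = 0 → ¬ IsInflationOf σ (x i).2

theorem exists_admissible_decomposition {N : ℕ} (π : Perm N) (hN : 2 ≤ N) :
    ∃ (s : AnyPerm) (x : Fin s.1 → AnyPerm) (f : Fin N → Fin s.1),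
      IsDecomposition π s.2 x f ∧ IsAdmissible s.2 x ∧ IsSimple s.2 ∧ 2 ≤ s.1 := by
  obtain ⟨⟨m, σ⟩, f, hf, hσ, hm⟩ := exists_isSimple_isBlockMap π hN
  by_cases hm2 : m = 2
  · subst hm2
    obtain ⟨f, hf, hmin⟩ := (Set.toFinite {f | IsBlockMap π σ f}).exists_minimalFor
      (fun f => f ⁻¹' {0}) _ ⟨f, hf⟩
    obtain ⟨x, hx⟩ := IsBlockMap.exists_isDecomposition hf
    refine ⟨⟨2, σ⟩, x, f, hx, fun _ i hi hs => ?_, hσ, hm⟩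
    obtain rfl : i = 0 := Fin.ext hi
    obtain ⟨g, hg, hlt⟩ := hx.isBlockMap.exists_smaller_first_block (hx.isPattern 0) hs
    exact hlt.not_subset (hmin hg hlt.subset)
  · obtain ⟨x, hx⟩ := hf.exists_isDecomposition
    exact ⟨⟨m, σ⟩, x, f, hx, fun h => absurd h hm2, hσ, hm⟩

theorem IsDecomposition.unique {N : ℕ} {π : Perm N} {s s' : AnyPerm} {x : Fin s.1 → AnyPerm}
    {x' : Fin s'.1 → AnyPerm} {f : Fin N → Fin s.1} {f' : Fin N → Fin s'.1}
    (hd : IsDecomposition π s.2 x f) (hd' : IsDecomposition π s'.2 x' f') (hs : IsSimple s.2)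
    (hs' : IsSimple s'.2) (hm : 2 ≤ s.1) (hm' : 2 ≤ s'.1) (ha : IsAdmissible s.2 x)
    (ha' : IsAdmissible s'.2 x') :
    (⟨s, x⟩ : Σ s : AnyPerm, Fin s.1 → AnyPerm) = ⟨s', x'⟩ := by
  obtain ⟨hss, hff⟩ := hd.isBlockMap.unique_of_isSimple hd'.isBlockMap hs hs' hm hm'
  obtain rfl : s = s' := hss
  obtain rfl : f = f' := by
    by_cases hs2 : s.1 = 2
    · obtain ⟨m, σ⟩ := s
      obtain rfl : m = 2 := hs2
      have hzero : f ⁻¹' {0} = f' ⁻¹' {0} := subset_antisymm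
        (hd'.isBlockMap.first_block_subset hd.isBlockMap (hd.isPattern 0) (ha rfl 0 rfl))
        (hd.isBlockMap.first_block_subset hd'.isBlockMap (hd'.isPattern 0) (ha' rfl 0 rfl))
      have heq : ∀ i j : Fin 2, (i = 0 ↔ j = 0) → i = j := by decide
      exact funext fun p => heq _ _ (Set.ext_iff.1 hzero p)
    · exact funext fun p => Fin.ext (hff hs2 p)
  obtain rfl : x = x' := funext fun i => (hd.isPattern i).unique (hd'.isPattern i)
  rfl

/-! ### Decompositions as inflations -/

theorem Perm.card_apply_lt {n : ℕ} (π : Perm n) (p : Fin n) :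
    (Finset.univ.filter fun q => π q < π p).card = π p :=
  (Finset.card_equiv π (by simp)).trans (Fin.card_Iio (π p))

/-- The formula in `IsInflation`, for the value at an entry of the block `i`. -/
theorem IsBlockMap.apply_eq {N m k : ℕ} {π : Perm N} {σ : Perm m} {f : Fin N → Fin m}
    (hf : IsBlockMap π σ f) {i : Fin m} {α : Perm k} {h : Fin k → Fin N}
    (hinj : Function.Injective h) (hrange : Set.range h = f ⁻¹' {i})
    (hlt : ∀ s t, π (h s) < π (h t) ↔ α s < α t) (j : Fin k) :
    (π (h j) : ℕ) = (∑ t ∈ Finset.univ.filter fun t => σ t < σ i,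
      (Finset.univ.filter fun q => f q = t).card) + (α j : ℕ) := by
  have hfh (s) : f (h s) = i := hrange.subset ⟨s, rfl⟩
  rw [Finset.sum_card_fiberwise_eq_card_filter, ← π.card_apply_lt, ← α.card_apply_lt,
    ← Finset.card_image_of_injective _ hinj, ← Finset.card_union_of_disjoint]
  · congr 1
    ext q
    by_cases hq : f q = i
    · obtain ⟨s, rfl⟩ := hrange.superset hq
      simp [hfh, hlt, hinj.eq_iff]
    · have hne (s) : h s ≠ q := fun hs => hq (hs ▸ hfh s)
      simp [hf.apply_lt_iff (show f q ≠ f (h j) from hfh j ▸ hq), hfh, hne]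
  · refine Finset.disjoint_left.2 fun q hq hq' => ?_
    obtain ⟨s, -, rfl⟩ := Finset.mem_image.1 hq'
    simp [hfh] at hq

namespace IsDecomposition

variable {N m : ℕ} {π : Perm N} {σ : Perm m} {x : Fin m → AnyPerm} {f : Fin N → Fin m}

theorem card_fibre (hd : IsDecomposition π σ x f) (i : Fin m) :
    (Finset.univ.filter fun q => f q = i).card = (x i).1 := by
  obtain ⟨h, hmono, hrange, -⟩ := hd.isPattern i
  rw [← Set.ncard_coe_finset, ← Nat.card_fin (x i).1,
    ← Set.ncard_range_of_injective hmono.injective, hrange]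
  congr 1
  ext q
  simp

theorem length_pos (hd : IsDecomposition π σ x f) (i : Fin m) : 0 < (x i).1 := by
  obtain ⟨p, hp⟩ := hd.isBlockMap.surjective i
  exact hd.card_fibre i ▸ Finset.card_pos.2 ⟨p, by simpa⟩

theorem length_eq (hd : IsDecomposition π σ x f) : N = ∑ i, (x i).1 := by
  simp [← hd.card_fibre, Finset.sum_card_fiberwise_eq_card_filter]

theorem exists_occurrence (hd : IsDecomposition π σ x f) (i : Fin m) :
    ∃ h : Fin (x i).1 → Fin N, Set.range h = f ⁻¹' {i} ∧ ∀ j,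
      (h j : ℕ) = (∑ t ∈ Finset.univ.filter fun t => t < i, (x t).1) + (j : ℕ) ∧
      (π (h j) : ℕ) = (∑ t ∈ Finset.univ.filter fun t => σ t < σ i, (x t).1) + ((x i).2 j : ℕ) := by
  obtain ⟨h, hmono, hrange, hlt⟩ := hd.isPattern i
  have hposition : IsBlockMap (1 : Perm N) (1 : Perm m) f :=
    ⟨hd.isBlockMap.surjective, hd.isBlockMap.monotone, hd.isBlockMap.monotone⟩
  simp only [← hd.card_fibre]
  exact ⟨h, hrange, fun j => ⟨hposition.apply_eq hmono.injective hrange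
    (α := 1) (fun s t => hmono.lt_iff_lt) j, hd.isBlockMap.apply_eq hmono.injective hrange hlt j⟩⟩

theorem isInflation (hd : IsDecomposition π σ x f) : IsInflation σ (fun i => (x i).2) π := by
  refine ⟨hd.length_pos, hd.length_eq, fun i j p hp => ?_⟩
  obtain ⟨h, -, hh⟩ := hd.exists_occurrence i
  obtain rfl : p = h j := Fin.ext (hp.trans (hh j).1.symm)
  exact (hh j).2

theorem eq_of_isInflation (hd : IsDecomposition π σ x f) {N' : ℕ} {π' : Perm N'}
    (hπ' : IsInflation σ (fun i => (x i).2) π') : (⟨N, π⟩ : AnyPerm) = ⟨N', π'⟩ := by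
  obtain rfl : N = N' := hd.length_eq.trans hπ'.2.1.symm
  refine congrArg (Sigma.mk N) (Equiv.ext fun p => Fin.ext ?_)
  obtain ⟨h, hrange, hh⟩ := hd.exists_occurrence (f p)
  obtain ⟨j, hj⟩ : p ∈ Set.range h := hrange ▸ rfl
  obtain ⟨hposition, hvalue⟩ := hh j
  rw [hj] at hposition hvalue
  rw [hπ'.2.2 _ j p hposition, hvalue]

end IsDecomposition

theorem injective_toLex_block {m : ℕ} {x : Fin m → AnyPerm} (τ : Perm m)
    (β : ∀ i, Perm (x i).1) : Function.Injective fun a : Σ i, Fin (x i).1 =>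
      (toLex (τ a.1, (β a.1 a.2 : ℕ)) : Fin m ×ₗ ℕ) := by
  rintro ⟨i, a⟩ ⟨j, b⟩ h
  obtain ⟨hij, hab⟩ := Prod.ext_iff.1 (toLex.injective h)
  obtain rfl : i = j := τ.injective hij
  obtain rfl : a = b := (β i).injective (Fin.ext hab)
  rfl

/-- The entries of the inflation are indexed by pairs `(i, a)`, where `a` is a position in `x i`;
their positions are ordered lexicographically, and so are their values `(σ i, x i a)`. -/
theorem exists_isDecomposition {m : ℕ} (σ : Perm m) (x : Fin m → AnyPerm)
    (hx : ∀ i, 0 < (x i).1) :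
    ∃ (p : AnyPerm) (f : Fin p.1 → Fin m), IsDecomposition p.2 σ x f := by
  obtain ⟨e, he⟩ :=
    exists_equiv_fin_lt_iff_lt rfl (injective_toLex_block 1 fun i => (1 : Perm (x i).1))
  obtain ⟨e', he'⟩ := exists_equiv_fin_lt_iff_lt rfl (injective_toLex_block σ fun i => (x i).2)
  simp only [Prod.Lex.toLex_lt_toLex] at he he'
  refine ⟨⟨_, e.symm.trans e'⟩, fun p => (e.symm p).1, .of_lt_iff_lt ?_ ?_, fun i =>
    ⟨fun a => e ⟨i, a⟩, fun a b hab => ?_, ?_, fun s t => ?_⟩⟩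
  · exact fun i => ⟨e ⟨i, 0, hx i⟩, by simp⟩
  · intro p q hpq
    obtain ⟨a, rfl⟩ := e.surjective p
    obtain ⟨b, rfl⟩ := e.surjective q
    simp only [Equiv.symm_apply_apply] at hpq
    simp [he, he', hpq, hpq.ne]
  · simpa [he] using hab
  · ext p
    obtain ⟨⟨j, a⟩, rfl⟩ := e.surjective p
    simp only [Set.mem_range, e.apply_eq_iff_eq, Set.mem_preimage, Equiv.symm_apply_apply,
      Set.mem_singleton_iff]
    exact ⟨fun ⟨b, hb⟩ => (Sigma.mk.inj hb).1.symm, by rintro rfl; exact ⟨a, rfl⟩⟩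
  · simp [he']

/-! ### Colours -/

theorem finiteLevels_length : FiniteLevels fun p : AnyPerm => p.1 := fun n =>
  .of_equiv (Perm n) (Equiv.sigmaSubtype n).symm

/-- The nonempty members of a class. -/
abbrev Member (C : ∀ n, Set (Perm n)) := {p : AnyPerm // 0 < p.1 ∧ p.2 ∈ C p.1}

theorem genFun_eq_weightGF (C : ∀ n, Set (Perm n)) (q : AnyPerm → Prop) :
    genFun (fun n => {π | π ∈ C n ∧ q ⟨n, π⟩}) =
      weightGF ℚ fun x : {x : Member C // q x.1} => x.1.1.1 := by
  ext n
  simp only [genFun, weightGF, PowerSeries.coeff_mk]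
  split_ifs with hn
  · have : IsEmpty {x : {x : Member C // q x.1} // x.1.1.1 = n} :=
      ⟨fun x => (x.1.1.2.1.trans_eq (x.2.trans hn)).false⟩
    simp
  · let toLevel (π : {π | π ∈ C n ∧ q ⟨n, π⟩}) :
        {x : {x : Member C // q x.1} // x.1.1.1 = n} :=
      ⟨⟨⟨⟨n, π⟩, Nat.pos_of_ne_zero hn, π.2.1⟩, π.2.2⟩, rfl⟩
    refine congrArg Nat.cast (Nat.card_eq_of_bijective toLevel ⟨fun π ρ h => ?_, ?_⟩)
    · simpa [toLevel, Subtype.ext_iff] using h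
    · rintro ⟨⟨⟨⟨_, π⟩, h⟩, hq⟩, rfl⟩
      exact ⟨⟨π, h.2, hq⟩, rfl⟩

theorem isAlgebraicOverQx_of_isAlgebraic {f : PowerSeries ℚ} (hf : IsAlgebraic (Polynomial ℚ) f) :
    IsAlgebraicOverQx f := by
  obtain ⟨P, hP, h⟩ := hf
  have hmap : algebraMap (Polynomial ℚ) (PowerSeries ℚ) = Polynomial.coeToPowerSeries.ringHom :=
    RingHom.ext fun p => by simp [PowerSeries.algebraMap_apply']
  exact ⟨P, hP, by rwa [Polynomial.aeval_def, hmap] at h⟩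

/-- The simple members of a class, excluding the degenerate ones of length less than two. -/
abbrev SimpleMember (C : ∀ n, Set (Perm n)) :=
  {p : AnyPerm // (p.2 ∈ C p.1 ∧ IsSimple p.2) ∧ 2 ≤ p.1}

/-- The information about a permutation that has to be recorded in order to compute that of its
inflations: the properties from `Ps` that it satisfies and the simple members of `C` it inflates. -/
def colour (C : ∀ n, Set (Perm n)) (Ps : Set (∀ n, Set (Perm n))) (x : AnyPerm) :
    Set Ps × Set (SimpleMember C) :=
  ({P | x.2 ∈ P.1 x.1}, {s | IsInflationOf s.1.2 x.2})

section Class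

variable {C : ∀ n, Set (Perm n)} {Ps : Set (∀ n, Set (Perm n))}

theorem FinitelyManySimples.finite_simpleMember (hfin : FinitelyManySimples C) :
    Finite (SimpleMember C) :=
  (hfin.subset fun _ (hp : _ ∧ _) => hp.1 :
    {p : AnyPerm | (p.2 ∈ C p.1 ∧ IsSimple p.2) ∧ 2 ≤ p.1}.Finite).to_subtype

theorem WreathClosed.exists_member_isDecomposition (hwc : WreathClosed C) (s : SimpleMember C)
    (x : Fin s.1.1 → Member C) :
    ∃ (p : Member C) (f : Fin p.1.1 → Fin s.1.1),
      IsDecomposition p.1.2 s.1.2 (fun i => (x i).1) f := by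
  obtain ⟨p, f, hd⟩ := exists_isDecomposition s.1.2 (fun i => (x i).1) fun i => (x i).2.1
  obtain ⟨q, -⟩ := hd.isBlockMap.surjective ⟨0, two_pos.trans_le s.2.2⟩
  exact ⟨⟨p, q.pos, hwc s.1.2 _ _ _ s.2.1.1 (fun i => (x i).2.2) hd.isInflation⟩, f, hd⟩

theorem IsPermClass.exists_member_isDecomposition (hC : IsPermClass C) {p : AnyPerm}
    (hp : p.2 ∈ C p.1) (hlength : 2 ≤ p.1) :
    ∃ (s : SimpleMember C) (x : Fin s.1.1 → Member C) (f : Fin p.1 → Fin s.1.1),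
      IsDecomposition p.2 s.1.2 (fun i => (x i).1) f ∧ IsAdmissible s.1.2 fun i => (x i).1 := by
  obtain ⟨s, x, f, hd, hadm, hsimple, hs⟩ := exists_admissible_decomposition p.2 hlength
  exact ⟨⟨s, ⟨hC _ _ hp hd.isBlockMap.contains, hsimple⟩, hs⟩,
    fun i => ⟨x i, hd.length_pos i, hC _ _ hp (hd.isPattern i).contains⟩, f, hd, hadm⟩

theorem IsBlockMap.colour_snd {p : AnyPerm} {s : SimpleMember C} {f : Fin p.1 → Fin s.1.1}
    (hf : IsBlockMap p.2 s.1.2 f) : (colour C Ps p).2 = {s} := by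
  ext s'
  refine ⟨fun ⟨f', hf'⟩ => Subtype.ext ?_, ?_⟩
  · exact (hf'.unique_of_isSimple hf s'.2.1.2 s.2.1.2 s'.2.2 s.2.2).1
  · rintro rfl
    exact ⟨f, hf⟩

theorem QueryComplete.colour_eq (hqc : QueryComplete Ps) {p p' : AnyPerm} {s : SimpleMember C}
    {x x' : Fin s.1.1 → AnyPerm} {f : Fin p.1 → Fin s.1.1} {f' : Fin p'.1 → Fin s.1.1}
    (hd : IsDecomposition p.2 s.1.2 x f) (hd' : IsDecomposition p'.2 s.1.2 x' f')
    (hx : ∀ i, colour C Ps (x i) = colour C Ps (x' i)) : colour C Ps p = colour C Ps p' := by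
  refine Prod.ext (Set.ext fun P => ?_)
    (hd.isBlockMap.colour_snd.trans hd'.isBlockMap.colour_snd.symm)
  exact hqc s.1.2 _ _ _ _ (fun i Q hQ => Set.ext_iff.1 (congrArg Prod.fst (hx i)) ⟨Q, hQ⟩)
    P.1 P.2 _ _ hd.isInflation hd'.isInflation

theorem IsAdmissible.of_colour_eq {s : SimpleMember C} {x x' : Fin s.1.1 → AnyPerm}
    (hx : IsAdmissible s.1.2 x) (h : ∀ i, colour C Ps (x i) = colour C Ps (x' i)) :
    IsAdmissible s.1.2 x' := fun hs i hi hinfl =>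
  hx hs i hi ((Set.ext_iff.1 (congrArg Prod.snd (h i)) s).2 hinfl)

theorem isAlgebraic_weightGF_colour {R : Type*} [CommRing R] [IsDomain R] (hC : IsPermClass C)
    (hwc : WreathClosed C) (hfin : FinitelyManySimples C) (hPs : Ps.Finite)
    (hqc : QueryComplete Ps) (t : Set Ps × Set (SimpleMember C)) :
    IsAlgebraic (Polynomial R)
      (weightGF R fun x : {x : Member C // colour C Ps x.1 = t} => x.1.1.1) := by
  have : Finite Ps := hPs.to_subtype
  have := hfin.finite_simpleMember
  choose infl block hinfl using fun s => hwc.exists_member_isDecomposition (C := C) s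
  refine isAlgebraic_weightGF_of_local_operations (finiteLevels_length.subtype _)
    (fun x : Member C => x.2.1) (fun x => colour C Ps x.1) (fun s : SimpleMember C => s.2.2)
    (fun s x => IsAdmissible s.1.2 fun i => (x i).1) infl
    (fun s x x' h hx => hx.of_colour_eq (congrFun h))
    (fun s x x' h => hqc.colour_eq (hinfl s x) (hinfl s x') (congrFun h))
    (fun s x => (hinfl s x).length_eq) ?_ ?_ t
  · rintro ⟨s, x⟩ hx ⟨s', x'⟩ hx' (h : infl s x = infl s' x')
    obtain ⟨f, hd'⟩ : ∃ f, IsDecomposition (infl s x).1.2 s'.1.2 (fun i => (x' i).1) f :=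
      h ▸ ⟨_, hinfl s' x'⟩
    obtain ⟨hs, hblocks⟩ := Sigma.mk.inj
      ((hinfl s x).unique hd' s.2.1.2 s'.2.1.2 s.2.2 s'.2.2 hx hx')
    obtain rfl : s = s' := Subtype.ext hs
    exact congrArg (Sigma.mk s) (funext fun i => Subtype.ext (congrFun (eq_of_heq hblocks) i))
  · intro p hp
    have hlength : 2 ≤ p.1.1 := by have := p.2.1; omega
    obtain ⟨s, x, f, hd, hadm⟩ := hC.exists_member_isDecomposition p.2.2 hlength
    exact ⟨s, x, hadm, Subtype.ext (hd.eq_of_isInflation (hinfl s x).isInflation).symm⟩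

end Class

theorem statement6_general (C : ∀ n, Set (Perm n)) (hC : IsPermClass C) (hwc : WreathClosed C)
    (hfin : FinitelyManySimples C)
    (Ps : Set (∀ n, Set (Perm n))) (hPs : Ps.Finite) (hqc : QueryComplete Ps)
    (F : Set (Set Ps)) :
    IsAlgebraicOverQx (genFun fun n => {π : Perm n | π ∈ C n ∧ {P : Ps | π ∈ P.1 n} ∈ F}) := by
  have : Finite Ps := hPs.to_subtype
  have := hfin.finite_simpleMember
  have := Fintype.ofFinite ↥{t : Set Ps × Set (SimpleMember C) | t.1 ∈ F}
  have hgenFun : genFun (fun n => {π : Perm n | π ∈ C n ∧ {P : Ps | π ∈ P.1 n} ∈ F}) =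
      weightGF ℚ fun x : {x : Member C // colour C Ps x.1 ∈ {t | t.1 ∈ F}} => x.1.1.1 :=
    genFun_eq_weightGF C fun p => (colour C Ps p).1 ∈ F
  rw [hgenFun,
    weightGF_mem_eq_sum (finiteLevels_length.subtype _) (fun x : Member C => colour C Ps x.1)]
  exact isAlgebraicOverQx_of_isAlgebraic <|
    Subalgebra.sum_mem (Subalgebra.algebraicClosure (Polynomial ℚ) (PowerSeries ℚ)) fun t _ =>
      isAlgebraic_weightGF_colour hC hwc hfin hPs hqc t.1

/-- Let `C` be a wreath-closed permutation class containing only finitely many simple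
permutations, `Ps` a finite query-complete set of properties, and `Qs ⊆ Ps`.  Then the
generating function of the set of permutations in `C` satisfying every property in `Qs`
is algebraic over `ℚ[x]`. -/
theorem statement6 (C : ∀ n, Set (Perm n)) (hC : IsPermClass C) (hwc : WreathClosed C)
    (hfin : FinitelyManySimples C)
    (Ps : Set (∀ n, Set (Perm n))) (hPs : Ps.Finite) (hqc : QueryComplete Ps)
    (Qs : Set (∀ n, Set (Perm n))) (hQs : Qs ⊆ Ps) :
    IsAlgebraicOverQx (genFun fun n => {π : Perm n | π ∈ C n ∧ ∀ P ∈ Qs, π ∈ P n}) := by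
  simpa only [Set.mem_ofPred_eq] using
    statement6_general C hC hwc hfin Ps hPs hqc {T | ∀ P (hP : P ∈ Qs), ⟨P, hQs hP⟩ ∈ T}
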